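/- Continuity of the Petz–Rényi divergence in α (upper bound): Let ρ, σ be states on ℂ^d and γ ∈ (0,1]. Then for all δ with 0 < δ ≤ γ/2, D_{1+δ}(ρ‖σ) ≤ D(ρ‖σ) + δ · c_γ(ρ‖σ)² in the extended reals. -/

import Mathlib

open scoped Kronecker ComplexOrder

noncomputable section

namespace QCD

attribute [local instance] Classical.propDecidable

variable {n m : Type} [Fintype n] [DecidableEq n] [Fintype m] [DecidableEq m]

/-- The real part of the trace of a complex matrix. -/
def rtr (A : Matrix n n ℂ) : ℝ := (A.trace).re

/-- A quantum state: positive semidefinite with trace one. -/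
def IsState (ρ : Matrix n n ℂ) : Prop := ρ.PosSemidef ∧ ρ.trace = 1

/-- Loewner order: `A ≤ B` iff `B - A` is positive semidefinite. -/
def loewnerLE (A B : Matrix n n ℂ) : Prop := (B - A).PosSemidef

/-- Support containment (for PSD matrices): `ker σ ⊆ ker ρ`. -/
def SuppLE (ρ σ : Matrix n n ℂ) : Prop := ∀ v : n → ℂ, σ.mulVec v = 0 → ρ.mulVec v = 0

/-- Functional calculus for Hermitian matrices (junk value `0` otherwise). -/
def matFun (f : ℝ → ℝ) (A : Matrix n n ℂ) : Matrix n n ℂ :=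
  if hA : A.IsHermitian then
    (hA.eigenvectorUnitary : Matrix n n ℂ) *
      Matrix.diagonal (fun i => (f (hA.eigenvalues i) : ℂ)) *
      (star (hA.eigenvectorUnitary : Matrix n n ℂ))
  else 0

/-- Matrix square root via functional calculus. -/
def msqrt (A : Matrix n n ℂ) : Matrix n n ℂ := matFun Real.sqrt A

/-- Matrix real power taken on the support (`0 ^ t := 0`). -/
def mpow (A : Matrix n n ℂ) (t : ℝ) : Matrix n n ℂ :=
  matFun (fun x => if x = 0 then 0 else x ^ t) A

/-- Matrix base-2 logarithm on the support. -/
def mlog (A : Matrix n n ℂ) : Matrix n n ℂ := matFun (Real.logb 2) A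

/-- Positive part of a Hermitian matrix. -/
def mposPart (A : Matrix n n ℂ) : Matrix n n ℂ := matFun (fun x => max x 0) A

/-- Trace norm. -/
def traceNorm (A : Matrix n m ℂ) : ℝ := rtr (msqrt (A.conjTranspose * A))

/-- Base-2 logarithm as an extended real (`⊥` on nonpositive input). -/
def elog (x : ℝ) : EReal := if x ≤ 0 then ⊥ else ((Real.logb 2 x : ℝ) : EReal)

/-- Base-2 logarithm of an extended real. -/
def elogE (x : EReal) : EReal := if x = ⊤ then ⊤ else elog x.toReal

/-- `2 ^ x` for an extended real `x`. -/
def epow2 (x : EReal) : EReal :=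
  if x = ⊤ then ⊤ else if x = ⊥ then 0 else ((((2:ℝ) ^ x.toReal : ℝ)) : EReal)

/-- Umegaki relative entropy (base 2), `⊤` if the support condition fails. -/
def relEntropy (ρ σ : Matrix n n ℂ) : EReal :=
  if SuppLE ρ σ then ((rtr (ρ * (mlog ρ - mlog σ)) : ℝ) : EReal) else ⊤

/-- Petz–Rényi divergence (base 2). -/
def petzRenyi (α : ℝ) (ρ σ : Matrix n n ℂ) : EReal :=
  if 1 < α ∧ ¬ SuppLE ρ σ then ⊤
  else (((α - 1)⁻¹ : ℝ) : EReal) * elog (rtr (mpow ρ α * mpow σ (1 - α)))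

/-- Geometric (maximal) Rényi divergence (base 2). -/
def geomRenyi (α : ℝ) (ρ σ : Matrix n n ℂ) : EReal :=
  if SuppLE ρ σ then
    (((α - 1)⁻¹ : ℝ) : EReal) *
      elog (rtr (σ * mpow (mpow σ (-(1/2 : ℝ)) * ρ * mpow σ (-(1/2 : ℝ))) α))
  else ⊤

/-- Max-relative entropy (base 2). -/
def dMax (ρ σ : Matrix n n ℂ) : EReal :=
  sInf {x : EReal | ∃ lam : ℝ, x = (lam : EReal) ∧ loewnerLE ρ ((((2:ℝ) ^ lam : ℝ) : ℂ) • σ)}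

/-- Uhlmann fidelity. -/
def fidelity (ρ σ : Matrix n n ℂ) : ℝ := (rtr (msqrt (msqrt σ * ρ * msqrt σ))) ^ 2

/-- Sine (purified) distance. -/
def sineDist (ρ σ : Matrix n n ℂ) : ℝ := Real.sqrt (1 - fidelity ρ σ)

/-- Smoothed max-relative entropy: smoothing over states in the sine-distance ball. -/
def dMaxSmooth (δ : ℝ) (ρ σ : Matrix n n ℂ) : EReal :=
  ⨅ (ρ' : Matrix n n ℂ) (_ : IsState ρ' ∧ sineDist ρ ρ' ≤ δ), dMax ρ' σ

/-- Hypothesis testing divergence (base 2). -/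
def dH (ε : ℝ) (ρ σ : Matrix n n ℂ) : EReal :=
  - elog (sInf {x : ℝ | ∃ T : Matrix n n ℂ,
      T.PosSemidef ∧ ((1 : Matrix n n ℂ) - T).PosSemidef ∧ 1 - ε ≤ rtr (T * ρ) ∧ x = rtr (T * σ)})

/-- The quantity `c_γ(ρ‖σ)`. -/
def cGamma (γ : ℝ) (ρ σ : Matrix n n ℂ) : EReal :=
  ((γ⁻¹ : ℝ) : EReal) *
    elogE (epow2 ((γ : ℝ) * petzRenyi (1 + γ) ρ σ) +
           epow2 (((-γ : ℝ) : EReal) * petzRenyi (1 - γ) ρ σ) + 1)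

/-- Binary entropy (base 2). -/
def binEnt (x : ℝ) : ℝ := -(x * Real.logb 2 x) - (1 - x) * Real.logb 2 (1 - x)

/-- Action of `id_k ⊗ Φ` on block matrices. -/
def blockApply {k : Type} (Φ : Matrix n n ℂ →ₗ[ℂ] Matrix m m ℂ)
    (M : Matrix (k × n) (k × n) ℂ) : Matrix (k × m) (k × m) ℂ :=
  Matrix.of fun p q => Φ (Matrix.of fun a b => M (p.1, a) (q.1, b)) p.2 q.2

/-- Action of `Φ ⊗ id_k` on block matrices. -/
def blockApplyRight {k : Type} (Φ : Matrix n n ℂ →ₗ[ℂ] Matrix m m ℂ)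
    (M : Matrix (n × k) (n × k) ℂ) : Matrix (m × k) (m × k) ℂ :=
  Matrix.of fun p q => Φ (Matrix.of fun a b => M (a, p.2) (b, q.2)) p.1 q.1

/-- Quantum channel: trace preserving and completely positive. -/
def IsQChannel (Φ : Matrix n n ℂ →ₗ[ℂ] Matrix m m ℂ) : Prop :=
  (∀ M : Matrix n n ℂ, (Φ M).trace = M.trace) ∧
  (∀ k : ℕ, 1 ≤ k → ∀ M : Matrix (Fin k × n) (Fin k × n) ℂ, M.PosSemidef →
    (blockApply Φ M).PosSemidef)

/-- `id_k ⊗ Φ` as a linear map. -/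
def blockApplyL (k : Type) (Φ : Matrix n n ℂ →ₗ[ℂ] Matrix m m ℂ) :
    Matrix (k × n) (k × n) ℂ →ₗ[ℂ] Matrix (k × m) (k × m) ℂ where
  toFun := blockApply Φ
  map_add' M N := by
    ext p q
    show Φ (Matrix.of fun a b => (M + N) (p.1, a) (q.1, b)) p.2 q.2 = _
    have h : (Matrix.of fun a b => (M + N) (p.1, a) (q.1, b)) =
        (Matrix.of fun a b => M (p.1, a) (q.1, b)) +
          (Matrix.of fun a b => N (p.1, a) (q.1, b)) := rfl
    rw [h, map_add]
    rfl
  map_smul' c M := by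
    ext p q
    show Φ (Matrix.of fun a b => (c • M) (p.1, a) (q.1, b)) p.2 q.2 = _
    have h : (Matrix.of fun a b => (c • M) (p.1, a) (q.1, b)) =
        c • (Matrix.of fun a b => M (p.1, a) (q.1, b)) := rfl
    rw [h, map_smul]
    rfl

/-- `Φ ⊗ id_k` as a linear map. -/
def blockApplyRightL (k : Type) (Φ : Matrix n n ℂ →ₗ[ℂ] Matrix m m ℂ) :
    Matrix (n × k) (n × k) ℂ →ₗ[ℂ] Matrix (m × k) (m × k) ℂ where
  toFun := blockApplyRight Φ
  map_add' M N := by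
    ext p q
    show Φ (Matrix.of fun a b => (M + N) (a, p.2) (b, q.2)) p.1 q.1 = _
    have h : (Matrix.of fun a b => (M + N) (a, p.2) (b, q.2)) =
        (Matrix.of fun a b => M (a, p.2) (b, q.2)) +
          (Matrix.of fun a b => N (a, p.2) (b, q.2)) := rfl
    rw [h, map_add]
    rfl
  map_smul' c M := by
    ext p q
    show Φ (Matrix.of fun a b => (c • M) (a, p.2) (b, q.2)) p.1 q.1 = _
    have h : (Matrix.of fun a b => (c • M) (a, p.2) (b, q.2)) =
        c • (Matrix.of fun a b => M (a, p.2) (b, q.2)) := rfl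
    rw [h, map_smul]
    rfl

/-- Tensor product of two channels (Kronecker product action). -/
def tensorChannel {n₁ m₁ n₂ m₂ : Type}
    (E₁ : Matrix n₁ n₁ ℂ →ₗ[ℂ] Matrix m₁ m₁ ℂ) (E₂ : Matrix n₂ n₂ ℂ →ₗ[ℂ] Matrix m₂ m₂ ℂ) :
    Matrix (n₁ × n₂) (n₁ × n₂) ℂ →ₗ[ℂ] Matrix (m₁ × m₂) (m₁ × m₂) ℂ :=
  (blockApplyRightL m₂ E₁).comp (blockApplyL n₁ E₂)

/-- Index type for `k`-fold tensor powers. -/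
def tpow (ι : Type) : ℕ → Type
  | 0 => PUnit
  | (k+1) => tpow ι k × ι

def tpowFintype (ι : Type) [Fintype ι] : ∀ k : ℕ, Fintype (tpow ι k)
  | 0 => inferInstanceAs (Fintype PUnit)
  | (k+1) => letI := tpowFintype ι k; inferInstanceAs (Fintype (tpow ι k × ι))

instance (ι : Type) [Fintype ι] (k : ℕ) : Fintype (tpow ι k) := tpowFintype ι k

def tpowDecEq (ι : Type) [DecidableEq ι] : ∀ k : ℕ, DecidableEq (tpow ι k)
  | 0 => inferInstanceAs (DecidableEq PUnit)
  | (k+1) => letI := tpowDecEq ι k; inferInstanceAs (DecidableEq (tpow ι k × ι))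

instance (ι : Type) [DecidableEq ι] (k : ℕ) : DecidableEq (tpow ι k) := tpowDecEq ι k

/-- `k`-fold Kronecker tensor power of a matrix. -/
def tpowMat (ρ : Matrix n n ℂ) : ∀ k : ℕ, Matrix (tpow n k) (tpow n k) ℂ
  | 0 => 1
  | (k+1) => (tpowMat ρ k) ⊗ₖ ρ

/-- `k`-fold tensor power of a channel. -/
def tpowChannel (Φ : Matrix n n ℂ →ₗ[ℂ] Matrix m m ℂ) :
    ∀ k : ℕ, Matrix (tpow n k) (tpow n k) ℂ →ₗ[ℂ] Matrix (tpow m k) (tpow m k) ℂ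
  | 0 => LinearMap.id
  | (k+1) => tensorChannel (tpowChannel Φ k) Φ

/-- Channel divergence induced by a divergence `𝔇` on states:
sup over `k ≥ 1` and input states `ν` on `ℂ^k ⊗ ℂ^d`. -/
def chDiv (𝔇 : ∀ (p : Type) [Fintype p] [DecidableEq p], Matrix p p ℂ → Matrix p p ℂ → EReal)
    (E F : Matrix n n ℂ →ₗ[ℂ] Matrix m m ℂ) : EReal :=
  ⨆ (k : ℕ) (_ : 1 ≤ k) (ν : Matrix (Fin k × n) (Fin k × n) ℂ) (_ : IsState ν),
    𝔇 (Fin k × m) (blockApply E ν) (blockApply F ν)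

/-- The geometric Rényi divergence as a divergence family. -/
def geomD (α : ℝ) : ∀ (p : Type) [Fintype p] [DecidableEq p],
    Matrix p p ℂ → Matrix p p ℂ → EReal :=
  fun _ _ _ => geomRenyi α

/-- The Umegaki relative entropy as a divergence family. -/
def relD : ∀ (p : Type) [Fintype p] [DecidableEq p],
    Matrix p p ℂ → Matrix p p ℂ → EReal :=
  fun _ _ _ => relEntropy

/-- The hypothesis testing divergence as a divergence family. -/
def dHD (ε : ℝ) : ∀ (p : Type) [Fintype p] [DecidableEq p],
    Matrix p p ℂ → Matrix p p ℂ → EReal :=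
  fun _ _ _ => dH ε

/-- Regularized channel relative entropy. -/
def regRelEntropy (E F : Matrix n n ℂ →ₗ[ℂ] Matrix m m ℂ) : EReal :=
  ⨆ (k : ℕ) (_ : 1 ≤ k),
    (((k : ℝ)⁻¹ : ℝ) : EReal) * chDiv relD (tpowChannel E k) (tpowChannel F k)

end QCD

namespace QCD

lemma aux_log3 {t : ℝ} (h0 : 0 < t) (h1 : t ≤ 1/2) :
    Real.log (1+t) - Real.log (1-t) ≤ 2*t*Real.log 3 := by
  have a := Real.hasSum_log_sub_log_of_abs_lt_one (x := t) (by rw [abs_of_pos h0]; linarith)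
  have b := (Real.hasSum_log_sub_log_of_abs_lt_one (x := 1/2) (by rw [abs_of_pos] <;> norm_num)).mul_left (2*t)
  have c := hasSum_le (fun k => ?_) a b
  · have : Real.log (1+1/2) - Real.log (1-1/2) = Real.log 3 := by
      rw [← Real.log_div (by norm_num) (by norm_num)]; norm_num
    rw [this] at c; exact c
  · have e : t^(2*k+1) ≤ 2*t*(1/2:ℝ)^(2*k+1) := by
      have : t^(2*k) ≤ (1/2:ℝ)^(2*k) := pow_le_pow_left₀ h0.le h1 _
      rw [pow_succ, pow_succ]; nlinarith
    have hk : (0:ℝ) ≤ 2 * (1/(2*(k:ℝ)+1)) := by positivity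
    calc _ ≤ 2 * (1/(2*(k:ℝ)+1)) * (2*t*(1/2:ℝ)^(2*k+1)) := mul_le_mul_of_nonneg_left e hk
      _ = _ := by ring

lemma aux_concave {t : ℝ} (h0 : 0 < t) (h1 : t ≤ 1/2) :
    ConcaveOn ℝ (Set.Ici (3:ℝ)) (fun u => u^t + u^(-t) - 2) := by
  refine concaveOn_of_hasDerivWithinAt2_nonpos (convex_Ici 3)
    (f' := fun u => t*u^(t-1) + (-t)*u^(-t-1))
    (f'' := fun u => t*((t-1)*u^(t-1-1)) + (-t)*((-t-1)*u^(-t-1-1))) ?_ ?_ ?_ ?_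
  · intro u hu
    have hu : (3:ℝ) ≤ u := hu
    have : u ≠ 0 := by linarith
    exact (((Real.hasDerivAt_rpow_const (p := t) (Or.inl this)).add
      (Real.hasDerivAt_rpow_const (p := -t) (Or.inl this))).sub_const 2).continuousAt.continuousWithinAt
  · intro u hu
    rw [interior_Ici] at hu
    have hu : (3:ℝ) < u := hu
    have : u ≠ 0 := by linarith
    exact (((Real.hasDerivAt_rpow_const (p := t) (Or.inl this)).add
      (Real.hasDerivAt_rpow_const (p := -t) (Or.inl this))).sub_const 2).hasDerivWithinAt
  · intro u hu
    rw [interior_Ici] at hu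
    have hu : (3:ℝ) < u := hu
    have : u ≠ 0 := by linarith
    exact (((Real.hasDerivAt_rpow_const (p := t-1) (Or.inl this)).const_mul t).add
      ((Real.hasDerivAt_rpow_const (p := -t-1) (Or.inl this)).const_mul (-t))).hasDerivWithinAt
  · intro u hu
    rw [interior_Ici] at hu
    have hu : (3:ℝ) < u := hu
    have up : 0 < u := by linarith
    have key : (1+t) * u^(-t-1-1) ≤ (1-t) * u^(t-1-1) := by
      have l1 : 0 < 1+t := by linarith
      have l2 : 0 < 1-t := by linarith
      rw [← Real.log_le_log_iff (by positivity) (by positivity),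
        Real.log_mul (by positivity) (by positivity), Real.log_mul (by positivity) (by positivity),
        Real.log_rpow up, Real.log_rpow up]
      have := aux_log3 h0 h1
      have h3 : Real.log 3 ≤ Real.log u := Real.log_le_log (by norm_num) hu.le
      nlinarith
    nlinarith

lemma aux_sinh {x : ℝ} (h0 : 0 ≤ x) (h1 : x ≤ 2 * Real.log 2) :
    Real.exp x + Real.exp (-x) - 2 ≤ x^2 / Real.log 2 := by
  have l2 := Real.log_two_lt_d9
  have l2' := Real.log_two_gt_d9
  set y := x/2 with hy
  have y0 : 0 ≤ y := by positivity
  have y1 : y ≤ 0.7 := by linarith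
  have e1 := (abs_le.1 (Real.exp_bound (x := y) (n := 3) (by rw [abs_of_nonneg y0]; linarith) (by norm_num))).2
  have e2 := (abs_le.1 (Real.exp_bound (x := -y) (n := 3) (by rw [abs_neg, abs_of_nonneg y0]; linarith) (by norm_num))).1
  rw [abs_of_nonneg y0] at e1
  rw [abs_neg, abs_of_nonneg y0] at e2
  simp [Finset.sum_range_succ, Nat.factorial] at e1 e2
  have hs : Real.exp y - Real.exp (-y) ≤ 2.22*y := by
    have : y^3 ≤ 0.49 * y := by nlinarith [mul_nonneg y0 (sub_nonneg.2 y1)]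
    nlinarith
  have hp : 0 ≤ Real.exp y - Real.exp (-y) := sub_nonneg.2 (Real.exp_le_exp.2 (by linarith))
  have eq : Real.exp x + Real.exp (-x) - 2 = (Real.exp y - Real.exp (-y))^2 := by
    have a : Real.exp x = Real.exp y * Real.exp y := by rw [← Real.exp_add]; congr 1; simp [hy]
    have b : Real.exp (-x) = Real.exp (-y) * Real.exp (-y) := by rw [← Real.exp_add]; congr 1; simp [hy]; ring
    have c : Real.exp y * Real.exp (-y) = 1 := by rw [← Real.exp_add]; simp
    rw [a, b]; linear_combination 2*c
  rw [eq, le_div_iff₀ (by linarith)]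
  have : (Real.exp y - Real.exp (-y))^2 ≤ (2.22*y)^2 := pow_le_pow_left₀ hp hs 2
  have hx : x = 2*y := by simp [hy]; ring
  rw [hx]
  nlinarith [sq_nonneg y, mul_nonneg (sq_nonneg (Real.exp y - Real.exp (-y))) (by linarith : 0 ≤ 0.6931471808 - Real.log 2)]

lemma aux_main {ι : Type*} [Fintype ι] (p S : ι → ℝ) (hp : ∀ i, 0 ≤ p i) (hp1 : ∑ i, p i = 1)
    {t : ℝ} (h0 : 0 < t) (h1 : t ≤ 1/2) :
    Real.log (∑ i, p i * Real.exp (t * S i)) - t * ∑ i, p i * S i ≤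
      t^2 * (Real.log (∑ i, p i * Real.exp (S i) + ∑ i, p i * Real.exp (- S i) + 1))^2
        / Real.log 2 := by
  set Z := ∑ i, p i * Real.exp (S i) + ∑ i, p i * Real.exp (- S i) + 1 with hZ
  set L := Real.log Z with hL
  have l2 : 0 < Real.log 2 := Real.log_pos (by norm_num)
  have hu3 : ∀ i, 3 ≤ Real.exp (S i) + Real.exp (- S i) + 1 := by
    intro i
    have c : Real.exp (S i) * Real.exp (-S i) = 1 := by rw [← Real.exp_add]; simp
    nlinarith [sq_nonneg (Real.exp (S i) - Real.exp (- S i)), Real.exp_pos (S i), Real.exp_pos (-S i)]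
  have hZs : Z = ∑ i, p i * (Real.exp (S i) + Real.exp (- S i) + 1) := by
    simp only [mul_add, Finset.sum_add_distrib, mul_one, hp1, hZ]
  have hZ3 : 3 ≤ Z := by
    rw [hZs]
    calc (3:ℝ) = ∑ i, p i * 3 := by rw [← Finset.sum_mul, hp1, one_mul]
      _ ≤ _ := Finset.sum_le_sum fun i _ => mul_le_mul_of_nonneg_left (hu3 i) (hp i)
  have hA : ∑ i, p i * Real.exp (S i) ≤ Z := by
    have : 0 ≤ ∑ i, p i * Real.exp (-S i) := Finset.sum_nonneg fun i _ => mul_nonneg (hp i) (Real.exp_pos _).le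
    linarith
  have hB : ∑ i, p i * Real.exp (-S i) ≤ Z := by
    have : 0 ≤ ∑ i, p i * Real.exp (S i) := Finset.sum_nonneg fun i _ => mul_nonneg (hp i) (Real.exp_pos _).le
    linarith
  have hL0 : 0 < L := Real.log_pos (by linarith)
  have hQ : 0 < ∑ i, p i * Real.exp (t * S i) := by
    obtain ⟨i, hi⟩ : ∃ i, p i ≠ 0 := by
      by_contra! h
      simp [h] at hp1
    refine Finset.sum_pos' (fun i _ => mul_nonneg (hp i) (Real.exp_pos _).le) ⟨i, Finset.mem_univ _, ?_⟩
    exact mul_pos (lt_of_le_of_ne (hp i) hi.symm) (Real.exp_pos _)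
  have hZp : 0 < Z := by linarith
  have expL : Real.exp L = Z := Real.exp_log hZp
  by_cases hc : 2 * Real.log 2 ≤ t * L
  · have b1 : Real.log (∑ i, p i * Real.exp (t * S i)) ≤ t * L := by
      rw [Real.log_le_iff_le_exp hQ]
      have q : ∀ i, Real.exp (t * S i) ≤ Real.exp (t*L) * (1 + t * (Real.exp (S i) / Z - 1)) := by
        intro i
        have pos : 0 < Real.exp (S i) / Z := by positivity
        have := _root_.rpow_one_add_le_one_add_mul_self (s := Real.exp (S i) / Z - 1) (by linarith) h0.le (by linarith)
        rw [add_sub_cancel, ← expL, ← Real.exp_sub, ← Real.exp_mul] at this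
        rw [← expL, ← Real.exp_sub]
        calc _ = Real.exp (t*L) * Real.exp ((S i - L)*t) := by rw [← Real.exp_add]; ring_nf
          _ ≤ _ := mul_le_mul_of_nonneg_left this (Real.exp_pos _).le
      calc _ ≤ ∑ i, p i * (Real.exp (t*L) * (1 + t * (Real.exp (S i) / Z - 1))) :=
            Finset.sum_le_sum fun i _ => mul_le_mul_of_nonneg_left (q i) (hp i)
        _ = ∑ i, (Real.exp (t*L) * (1-t) * p i + Real.exp (t*L) * t / Z * (p i * Real.exp (S i))) :=
            Finset.sum_congr rfl fun i _ => by field_simp; ring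
        _ = Real.exp (t*L) * (1-t) + Real.exp (t*L) * t / Z * ∑ i, p i * Real.exp (S i) := by
            rw [Finset.sum_add_distrib, ← Finset.mul_sum, ← Finset.mul_sum, hp1, mul_one]
        _ ≤ Real.exp (t*L) * (1-t) + Real.exp (t*L) * t / Z * Z := by gcongr
        _ = _ := by field_simp; ring
    have b2 : -L ≤ ∑ i, p i * S i := by
      have q : ∀ i, - S i - L ≤ Real.exp (-S i) / Z - 1 := by
        intro i
        have := Real.add_one_le_exp (-S i - L)
        rw [Real.exp_sub, expL] at this; linarith
      have := Finset.sum_le_sum fun i (_ : i ∈ Finset.univ) => mul_le_mul_of_nonneg_left (q i) (hp i)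
      have e1 : ∑ i, p i * (-S i - L) = - ∑ i, p i * S i - L := by
        simp only [mul_sub, Finset.sum_sub_distrib, ← Finset.sum_mul, hp1, mul_neg, Finset.sum_neg_distrib, one_mul]
      have e2 : ∑ i, p i * (Real.exp (-S i) / Z - 1) = (∑ i, p i * Real.exp (-S i)) / Z - 1 := by
        simp only [mul_sub, Finset.sum_sub_distrib, Finset.sum_div, mul_one, hp1, mul_div_assoc]
      rw [e1, e2] at this
      have : (∑ i, p i * Real.exp (-S i)) / Z ≤ 1 := (div_le_one hZp).2 hB
      linarith
    have : 2 * (t*L) ≤ t^2*L^2 / Real.log 2 := by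
      rw [le_div_iff₀ l2]
      have : 0 < t * L := by positivity
      nlinarith
    nlinarith
  · have hc := (not_le.1 hc).le
    have s1 := Real.log_le_sub_one_of_pos hQ
    have q : ∀ i, Real.exp (t * S i) - 1 - t * S i ≤
        (Real.exp (S i) + Real.exp (- S i) + 1)^t + (Real.exp (S i) + Real.exp (- S i) + 1)^(-t) - 2 := by
      intro i
      set u := Real.exp (S i) + Real.exp (- S i) + 1
      have up : 0 < u := by have := hu3 i; linarith
      have a1 := Real.add_one_le_exp (-(t * S i))
      have a2 : |t * S i| ≤ |t * Real.log u| := by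
        rw [abs_mul, abs_mul]
        refine mul_le_mul_of_nonneg_left ?_ (abs_nonneg _)
        refine le_trans ?_ (le_abs_self _)
        rw [Real.le_log_iff_exp_le up]
        rcases abs_cases (S i) with h | h <;> rw [h.1] <;> 
          linarith [Real.exp_pos (S i), Real.exp_pos (-S i)]
      have a3 := Real.cosh_le_cosh.2 a2
      rw [Real.cosh_eq, Real.cosh_eq] at a3
      rw [Real.rpow_def_of_pos up, Real.rpow_def_of_pos up]
      have e1 : Real.log u * t = t * Real.log u := by ring
      have e2 : Real.log u * (-t) = -(t * Real.log u) := by ring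
      rw [e1, e2]
      linarith
    have J := (aux_concave h0 h1).le_map_sum (t := Finset.univ) (w := p)
      (p := fun i => Real.exp (S i) + Real.exp (- S i) + 1) (fun i _ => hp i) hp1 (fun i _ => hu3 i)
    simp only [smul_eq_mul] at J
    rw [← hZs] at J
    have q2 := Finset.sum_le_sum fun i (_ : i ∈ Finset.univ) => mul_le_mul_of_nonneg_left (q i) (hp i)
    have e : ∑ i, p i * (Real.exp (t * S i) - 1 - t * S i) = ∑ i, p i * Real.exp (t * S i) - 1 - t * ∑ i, p i * S i := by
      simp only [mul_sub, Finset.sum_sub_distrib, mul_one, hp1, Finset.mul_sum]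
      congr 1
      exact Finset.sum_congr rfl fun i _ => by ring
    rw [e] at q2
    have fin := aux_sinh (x := t * L) (by positivity) hc
    have z1 : Z^t = Real.exp (t*L) := by rw [Real.rpow_def_of_pos hZp, mul_comm]
    have z2 : Z^(-t) = Real.exp (-(t*L)) := by rw [Real.rpow_def_of_pos hZp]; congr 1; ring
    rw [z1, z2] at J
    rw [mul_pow] at fin
    linarith

section

variable {n : Type} [Fintype n] [DecidableEq n]

/-- Overlap weights of the two eigenbases. -/
def ovl {A B : Matrix n n ℂ} (hA : A.IsHermitian) (hB : B.IsHermitian) (i j : n) : ℝ :=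
  Complex.normSq ((star (hA.eigenvectorUnitary : Matrix n n ℂ) *
    (hB.eigenvectorUnitary : Matrix n n ℂ)) i j)

lemma rtr_matFun_mul {A B : Matrix n n ℂ} (hA : A.IsHermitian) (hB : B.IsHermitian)
    (f g : ℝ → ℝ) :
    rtr (matFun f A * matFun g B) =
      ∑ i, ∑ j, f (hA.eigenvalues i) * g (hB.eigenvalues j) * ovl hA hB i j := by
  unfold rtr matFun ovl
  rw [dif_pos hA, dif_pos hB]
  set U := (hA.eigenvectorUnitary : Matrix n n ℂ)
  set V := (hB.eigenvectorUnitary : Matrix n n ℂ)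
  set W := star U * V with hW
  have hW' : star W = star V * U := by rw [hW, star_mul, star_star]
  have e : (U * Matrix.diagonal (fun i => (f (hA.eigenvalues i) : ℂ)) * star U *
      (V * Matrix.diagonal (fun i => (g (hB.eigenvalues i) : ℂ)) * star V)).trace =
      (Matrix.diagonal (fun i => (f (hA.eigenvalues i) : ℂ)) * W *
        Matrix.diagonal (fun i => (g (hB.eigenvalues i) : ℂ)) * star W).trace := by
    rw [hW', hW]
    simp only [Matrix.mul_assoc]
    rw [Matrix.trace_mul_comm]
    simp only [Matrix.mul_assoc]
  rw [e]
  simp only [Matrix.trace, Matrix.diag, Matrix.mul_apply (N := star W), Matrix.mul_diagonal, Matrix.diagonal_mul,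
    Matrix.star_apply, Complex.re_sum]
  refine Finset.sum_congr rfl fun i _ => Finset.sum_congr rfl fun j _ => ?_
  have : (f (hA.eigenvalues i) : ℂ) * W i j * (g (hB.eigenvalues j) : ℂ) * star (W i j) =
    ((f (hA.eigenvalues i) * g (hB.eigenvalues j) * Complex.normSq (W i j) : ℝ) : ℂ) := by
    push_cast
    rw [← Complex.mul_conj]
    simp only [RCLike.star_def]
    ring
  rw [this, Complex.ofReal_re]

lemma matFun_id {A : Matrix n n ℂ} (hA : A.IsHermitian) : matFun (fun x => x) A = A := by
  unfold matFun
  rw [dif_pos hA]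
  conv_rhs => rw [hA.spectral_theorem]
  rfl

lemma matFun_one {A : Matrix n n ℂ} (hA : A.IsHermitian) : matFun (fun _ => 1) A = 1 := by
  unfold matFun
  rw [dif_pos hA]
  simp

lemma matFun_mul {A : Matrix n n ℂ} (f g : ℝ → ℝ) :
    matFun f A * matFun g A = matFun (fun x => f x * g x) A := by
  unfold matFun
  split_ifs with hA
  · set U := (hA.eigenvectorUnitary : Matrix n n ℂ)
    have hU : star U * U = 1 := Unitary.coe_star_mul_self hA.eigenvectorUnitary
    calc _ = U * Matrix.diagonal (fun i => (f (hA.eigenvalues i) : ℂ)) * (star U * U) *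
          Matrix.diagonal (fun i => (g (hA.eigenvalues i) : ℂ)) * star U := by
            simp only [Matrix.mul_assoc]
      _ = _ := by
        rw [hU, Matrix.mul_one, Matrix.mul_assoc U, Matrix.diagonal_mul_diagonal]
        simp
  · simp

lemma ovl_supp {A B : Matrix n n ℂ} (hA : A.IsHermitian) (hB : B.IsHermitian)
    (h : SuppLE A B) (i j : n) (hj : hB.eigenvalues j = 0) :
    hA.eigenvalues i * ovl hA hB i j = 0 := by
  set U := (hA.eigenvectorUnitary : Matrix n n ℂ) with hU
  set V := (hB.eigenvectorUnitary : Matrix n n ℂ) with hV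
  have h1 : A.mulVec (V.mulVec (Pi.single j 1)) = 0 := by
    apply h
    rw [hV, Matrix.IsHermitian.eigenvectorUnitary_mulVec, Matrix.IsHermitian.mulVec_eigenvectorBasis,
      hj, zero_smul]
  have h2 : (star U * A) = Matrix.diagonal (fun i => (hA.eigenvalues i : ℂ)) * star U := by
    have hUU : star U * U = 1 := Unitary.coe_star_mul_self hA.eigenvectorUnitary
    conv_lhs => rw [← matFun_id hA]
    unfold matFun
    rw [dif_pos hA]
    rw [← Matrix.mul_assoc, ← Matrix.mul_assoc, hUU, Matrix.one_mul]
  have h3 : (star U * A * V).mulVec (Pi.single j 1) = 0 := by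
    rw [← Matrix.mulVec_mulVec, ← Matrix.mulVec_mulVec, h1, Matrix.mulVec_zero]
  rw [h2, Matrix.mul_assoc, Matrix.mulVec_single_one] at h3
  have h4 := congrFun h3 i
  simp only [Matrix.col_apply, Matrix.diagonal_mul, Pi.zero_apply, mul_eq_zero] at h4
  unfold ovl
  rcases h4 with h4 | h4
  · rw [Complex.ofReal_eq_zero.1 h4, zero_mul]
  · rw [h4]; simp

lemma elog_pos {x : ℝ} (hx : 0 < x) : elog x = ((Real.logb 2 x : ℝ) : EReal) := by
  unfold elog; rw [if_neg (not_le.2 hx)]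

lemma epow2_coe (x : ℝ) : epow2 (x : EReal) = (((2:ℝ)^x : ℝ) : EReal) := by
  unfold epow2; simp

lemma petz_coe {ρ σ : Matrix n n ℂ} (h : SuppLE ρ σ) (a : ℝ)
    (hq : 0 < rtr (mpow ρ (1+a) * mpow σ (-a))) :
    petzRenyi (1+a) ρ σ =
      ((a⁻¹ * Real.logb 2 (rtr (mpow ρ (1+a) * mpow σ (-a))) : ℝ) : EReal) := by
  have e1 : 1 - (1 + a) = -a := by ring
  have e2 : 1 + a - 1 = a := by ring
  unfold petzRenyi
  rw [if_neg (by tauto), e1, e2, elog_pos hq, EReal.coe_mul]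

lemma epow2_nonneg (x : EReal) : 0 ≤ epow2 x := by
  unfold epow2
  split_ifs
  · exact le_top
  · exact le_rfl
  · exact EReal.coe_nonneg.2 (by positivity)

lemma cGamma_top {ρ σ : Matrix n n ℂ} (h : ¬ SuppLE ρ σ) {γ : ℝ} (hγ : 0 < γ) :
    cGamma γ ρ σ = ⊤ := by
  have hp : petzRenyi (1+γ) ρ σ = ⊤ := by
    unfold petzRenyi; rw [if_pos ⟨by linarith, h⟩]
  unfold cGamma
  rw [hp, EReal.coe_mul_top_of_pos hγ]
  have e : epow2 ⊤ = ⊤ := by unfold epow2; simp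
  have hb := epow2_nonneg (((-γ : ℝ) : EReal) * petzRenyi (1 - γ) ρ σ)
  have hb' : epow2 (((-γ : ℝ) : EReal) * petzRenyi (1 - γ) ρ σ) ≠ ⊥ := by
    intro hh; rw [hh] at hb; simp at hb
  rw [e, EReal.top_add_of_ne_bot hb', EReal.top_add_of_ne_bot (by exact EReal.coe_ne_bot 1)]
  have : elogE ⊤ = ⊤ := by unfold elogE; simp
  rw [this, EReal.coe_mul_top_of_pos (inv_pos.2 hγ)]

lemma rtr_pow {ρ σ : Matrix n n ℂ} (hρ : ρ.PosSemidef) (hσ : σ.PosSemidef) (h : SuppLE ρ σ)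
    (a : ℝ) :
    rtr (mpow ρ (1+a) * mpow σ (-a)) =
      ∑ x : n × n, hρ.1.eigenvalues x.1 * ovl hρ.1 hσ.1 x.1 x.2 *
        Real.exp (a * (Real.log (hρ.1.eigenvalues x.1) - Real.log (hσ.1.eigenvalues x.2))) := by
  unfold mpow
  rw [rtr_matFun_mul hρ.1 hσ.1, Fintype.sum_prod_type]
  refine Finset.sum_congr rfl fun i _ => Finset.sum_congr rfl fun j _ => ?_
  dsimp only
  by_cases hl : hρ.1.eigenvalues i = 0
  · simp [hl]
  by_cases hm : hσ.1.eigenvalues j = 0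
  · rw [ovl_supp hρ.1 hσ.1 h i j hm]; simp [hm]
  have hl' : 0 < hρ.1.eigenvalues i := lt_of_le_of_ne (hρ.eigenvalues_nonneg i) (Ne.symm hl)
  have hm' : 0 < hσ.1.eigenvalues j := lt_of_le_of_ne (hσ.eigenvalues_nonneg j) (Ne.symm hm)
  rw [if_neg hl, if_neg hm, Real.rpow_add hl', Real.rpow_one, Real.rpow_def_of_pos hl',
    Real.rpow_def_of_pos hm']
  have : Real.exp (a * (Real.log (hρ.1.eigenvalues i) - Real.log (hσ.1.eigenvalues j))) =
    Real.exp (Real.log (hρ.1.eigenvalues i) * a) * Real.exp (Real.log (hσ.1.eigenvalues j) * -a) := by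
    rw [← Real.exp_add]; congr 1; ring
  rw [this]; ring

lemma rtr_rel {ρ σ : Matrix n n ℂ} (hρ : ρ.PosSemidef) (hσ : σ.PosSemidef) :
    rtr (ρ * (mlog ρ - mlog σ)) =
      (∑ x : n × n, hρ.1.eigenvalues x.1 * ovl hρ.1 hσ.1 x.1 x.2 *
        (Real.log (hρ.1.eigenvalues x.1) - Real.log (hσ.1.eigenvalues x.2))) / Real.log 2 := by
  have e1 : rtr (ρ * (mlog ρ - mlog σ)) =
      rtr (matFun (fun x => x * Real.logb 2 x) ρ * matFun (fun _ => 1) σ) -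
      rtr (matFun (fun x => x) ρ * matFun (Real.logb 2) σ) := by
    rw [← matFun_mul, matFun_one hσ.1, matFun_id hρ.1]
    unfold rtr mlog
    rw [Matrix.mul_sub, Matrix.trace_sub, Complex.sub_re, Matrix.mul_one]
  rw [e1, rtr_matFun_mul hρ.1 hσ.1, rtr_matFun_mul hρ.1 hσ.1, Fintype.sum_prod_type,
    Finset.sum_div, ← Finset.sum_sub_distrib]
  refine Finset.sum_congr rfl fun i _ => ?_
  rw [Finset.sum_div, ← Finset.sum_sub_distrib]
  refine Finset.sum_congr rfl fun j _ => ?_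
  dsimp only [Real.logb]
  ring

lemma sum_p {ρ σ : Matrix n n ℂ} (hρ : IsState ρ) (hσ : σ.PosSemidef) :
    ∑ x : n × n, hρ.1.1.eigenvalues x.1 * ovl hρ.1.1 hσ.1 x.1 x.2 = 1 := by
  have e1 : rtr (matFun (fun x => x) ρ * matFun (fun _ => 1) σ) = 1 := by
    rw [matFun_one hσ.1, matFun_id hρ.1.1, Matrix.mul_one, rtr, hρ.2, Complex.one_re]
  rw [rtr_matFun_mul hρ.1.1 hσ.1] at e1
  rw [← e1, Fintype.sum_prod_type]
  simp

end

/-- Continuity of the Petz–Rényi divergence in α (upper bound). -/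
theorem petzRenyi_continuity_upper {d : ℕ} (ρ σ : Matrix (Fin d) (Fin d) ℂ)
    (hρ : IsState ρ) (hσ : IsState σ) (γ : ℝ) (hγ : 0 < γ ∧ γ ≤ 1)
    (δ : ℝ) (hδ : 0 < δ ∧ δ ≤ γ / 2) :
    petzRenyi (1 + δ) ρ σ ≤
      relEntropy ρ σ + (δ : EReal) * (cGamma γ ρ σ * cGamma γ ρ σ) := by
  obtain ⟨hγ0, -⟩ := hγ
  obtain ⟨hδ0, hδγ⟩ := hδ
  by_cases hs : SuppLE ρ σ
  swap
  · rw [cGamma_top hs hγ0, EReal.top_mul_top, EReal.coe_mul_top_of_pos hδ0]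
    unfold relEntropy
    rw [if_neg hs]; simp
  set X : Fin d × Fin d → ℝ := fun x =>
    Real.log (hρ.1.1.eigenvalues x.1) - Real.log (hσ.1.1.eigenvalues x.2) with hX
  set p : Fin d × Fin d → ℝ := fun x =>
    hρ.1.1.eigenvalues x.1 * ovl hρ.1.1 hσ.1.1 x.1 x.2 with hpdef
  have hp : ∀ x, 0 ≤ p x := fun x =>
    mul_nonneg (hρ.1.eigenvalues_nonneg _) (Complex.normSq_nonneg _)
  have hp1 : ∑ x, p x = 1 := sum_p hρ hσ.1
  have hQ : ∀ a : ℝ, rtr (mpow ρ (1+a) * mpow σ (-a)) = ∑ x, p x * Real.exp (a * X x) :=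
    fun a => rtr_pow hρ.1 hσ.1 hs a
  have hQpos : ∀ a : ℝ, 0 < rtr (mpow ρ (1+a) * mpow σ (-a)) := by
    intro a
    rw [hQ]
    obtain ⟨i, hi⟩ : ∃ i, p i ≠ 0 := by
      by_contra! h
      simp [h] at hp1
    refine Finset.sum_pos' (fun i _ => mul_nonneg (hp i) (Real.exp_pos _).le)
      ⟨i, Finset.mem_univ _, ?_⟩
    exact mul_pos (lt_of_le_of_ne (hp i) hi.symm) (Real.exp_pos _)
  have hpow : ∀ a : ℝ, a ≠ 0 → epow2 ((a : EReal) * petzRenyi (1 + a) ρ σ) =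
      ((rtr (mpow ρ (1+a) * mpow σ (-a)) : ℝ) : EReal) := by
    intro a ha
    rw [petz_coe hs a (hQpos a), ← EReal.coe_mul, epow2_coe, ← mul_assoc, mul_inv_cancel₀ ha,
      one_mul, Real.rpow_logb (by norm_num) (by norm_num) (hQpos a)]
  set Z := ∑ x, p x * Real.exp (γ * X x) + ∑ x, p x * Real.exp (-(γ * X x)) + 1 with hZ
  have hc : cGamma γ ρ σ = ((γ⁻¹ * Real.logb 2 Z : ℝ) : EReal) := by
    have h1 := hpow γ hγ0.ne'
    have h2 := hpow (-γ) (neg_ne_zero.2 hγ0.ne')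
    rw [← sub_eq_add_neg 1 γ] at h2
    unfold cGamma
    have e0 : rtr (mpow ρ (1 - γ) * mpow σ (- -γ)) = ∑ x, p x * Real.exp (-(γ * X x)) := by
      rw [sub_eq_add_neg, hQ (-γ)]; simp only [neg_mul]
    have e1 : rtr (mpow ρ (1 + γ) * mpow σ (-γ)) + rtr (mpow ρ (1 - γ) * mpow σ (- -γ)) + 1 = Z := by
      rw [e0, hQ γ]
    have hZ0 : 0 < Z := by
      have a1 := hQpos γ
      have a2 := hQpos (-γ)
      rw [← sub_eq_add_neg 1 γ] at a2
      linarith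
    rw [h1, h2, ← EReal.coe_one, ← EReal.coe_add, ← EReal.coe_add, e1]
    unfold elogE
    rw [if_neg (EReal.coe_ne_top _), EReal.toReal_coe, elog_pos hZ0, EReal.coe_mul]
  rw [hc, petz_coe hs δ (hQpos δ)]
  unfold relEntropy
  rw [if_pos hs, ← EReal.coe_mul, ← EReal.coe_mul, ← EReal.coe_add, EReal.coe_le_coe_iff,
    rtr_rel hρ.1 hσ.1, hQ]
  change δ⁻¹ * _ ≤ (∑ x, p x * X x) / _ + _
  have main := aux_main p (fun x => γ * X x) hp hp1 (t := δ/γ) (by positivity)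
    (by rw [div_le_iff₀ hγ0]; linarith)
  have l2 : 0 < Real.log 2 := Real.log_pos (by norm_num)
  have e1 : ∀ x, δ / γ * (γ * X x) = δ * X x := fun x => by field_simp
  have e2 : δ / γ * ∑ x, p x * (γ * X x) = δ * ∑ x, p x * X x := by
    rw [Finset.mul_sum, Finset.mul_sum]
    exact Finset.sum_congr rfl fun x _ => by field_simp
  simp only [e1] at main
  rw [e2, ← hZ] at main
  unfold Real.logb
  have hk : 0 ≤ (δ * Real.log 2)⁻¹ := by positivity
  have m2 := mul_le_mul_of_nonneg_left main hk
  have f1 : (δ * Real.log 2)⁻¹ * (Real.log (∑ x, p x * Real.exp (δ * X x)) - δ * ∑ x, p x * X x) =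
    δ⁻¹ * (Real.log (∑ x, p x * Real.exp (δ * X x)) / Real.log 2) - (∑ x, p x * X x) / Real.log 2 := by
    field_simp
  have f2 : (δ * Real.log 2)⁻¹ * ((δ/γ)^2 * Real.log Z ^ 2 / Real.log 2) =
    δ * (γ⁻¹ * (Real.log Z / Real.log 2) * (γ⁻¹ * (Real.log Z / Real.log 2))) := by
    field_simp
  rw [f1, f2] at m2
  linarith

end QCD
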